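/- arXiv:1004.1955 — 2 statements merged into one kernel-verified Lean document; each statement's English description precedes it below -/
import Mathlib

section
/- Let r ≥ 1 and m ≥ 1 be integers and let α be a real number with 0 ≤ α < m/2. Let h and s be independent random variables, with h distributed chi-squared with r degrees of freedom and s distributed chi-squared with m degrees of freedom. Then E[ (1 + h/s)^α ] ≤ ( Γ((m+r)/2) / ( Γ(r/2)·Γ(m/2) ) ) · ( 2/(m − 2α) + 2/r ), where Γ is the Gamma function. -/
open MeasureTheory ProbabilityTheory

/-- The chi-squared distribution with `k` degrees of freedom: the Gamma distribution
with shape `k/2` and rate `1/2`. -/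
noncomputable def chiSquared (k : ℝ) : Measure ℝ := gammaMeasure (k / 2) (1 / 2)

/-!
Write `(1 + h / s) ^ α = s ^ (-α) * (h + s) ^ α`. The factor `s ^ (-α)` tilts the Gamma law of `s`
with shape `b = m / 2` to the one with shape `b - α`, up to a constant. Under the tilted law `h + s`
is again Gamma distributed, with shape `a + b - α` where `a = r / 2`, so only a moment of a Gamma
law remains and the expectation is exactly `B(a, b - α) / B(a, b)`. Log-convexity of `Γ` and
`Γ 1 = 1` give `Γ (1 + x) Γ (1 + y) ≤ Γ (1 + x + y)`, that is, `B(x, y) ≤ 1 / x + 1 / y`.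
-/

lemma Gamma_one_add_mul_le_rpow {p z : ℝ} (hp0 : 0 < p) (hp1 : p < 1) (hz : 0 < z) :
    Real.Gamma (1 + p * z) ≤ Real.Gamma (1 + z) ^ p := by
  have log_convex := Real.Gamma_mul_add_mul_le_rpow_Gamma_mul_rpow_Gamma (s := 1) (t := 1 + z)
    one_pos (by positivity) (sub_pos.2 hp1) hp0 (sub_add_cancel 1 p)
  rwa [Real.Gamma_one, Real.one_rpow, one_mul,
    show (1 - p) * 1 + p * (1 + z) = 1 + p * z by ring] at log_convex

lemma Gamma_one_add_mul_Gamma_one_add_le {x y : ℝ} (hx : 0 < x) (hy : 0 < y) :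
    Real.Gamma (1 + x) * Real.Gamma (1 + y) ≤ Real.Gamma (1 + (x + y)) := by
  have hxy : 0 < x + y := add_pos hx hy
  have hΓx := Gamma_one_add_mul_le_rpow (p := x / (x + y)) (z := x + y)
    (by positivity) ((div_lt_one hxy).2 (by linarith)) hxy
  have hΓy := Gamma_one_add_mul_le_rpow (p := y / (x + y)) (z := x + y)
    (by positivity) ((div_lt_one hxy).2 (by linarith)) hxy
  rw [div_mul_cancel₀ _ hxy.ne'] at hΓx hΓy
  calc Real.Gamma (1 + x) * Real.Gamma (1 + y)
    _ ≤ Real.Gamma (1 + (x + y)) ^ (x / (x + y)) * Real.Gamma (1 + (x + y)) ^ (y / (x + y)) :=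
      mul_le_mul hΓx hΓy (by positivity) (by positivity)
    _ = Real.Gamma (1 + (x + y)) := by
      rw [← Real.rpow_add (by positivity), ← add_div, div_self hxy.ne', Real.rpow_one]

lemma beta_le_one_div_add_one_div {x y : ℝ} (hx : 0 < x) (hy : 0 < y) :
    beta x y ≤ 1 / x + 1 / y := by
  have hxy : 0 < x + y := add_pos hx hy
  have hGamma := Gamma_one_add_mul_Gamma_one_add_le hx hy
  simp only [add_comm (1 : ℝ), Real.Gamma_add_one hx.ne', Real.Gamma_add_one hy.ne',
    Real.Gamma_add_one hxy.ne'] at hGamma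
  rw [beta, div_add_div _ _ hx.ne' hy.ne',
    div_le_div_iff₀ (Real.Gamma_pos_of_pos hxy) (mul_pos hx hy)]
  linarith

lemma measurable_gammaPDF (a r : ℝ) : Measurable (gammaPDF a r) :=
  (measurable_gammaPDFReal a r).ennreal_ofReal

lemma ae_pos_gammaMeasure (a r : ℝ) : ∀ᵐ x ∂gammaMeasure a r, 0 < x := by
  rw [gammaMeasure, ae_withDensity_iff (measurable_gammaPDF a r)]
  filter_upwards [Measure.ae_ne volume (0 : ℝ)] with x hx hpdf
  contrapose! hpdf
  exact gammaPDF_of_neg (hpdf.lt_of_ne hx)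

lemma one_add_div_rpow {x y : ℝ} (hx : 0 ≤ x) (hy : 0 < y) (c : ℝ) :
    (1 + x / y) ^ c = y ^ (-c) * (x + y) ^ c := by
  rw [one_add_div hy.ne', add_comm y, Real.div_rpow (by positivity) hy.le, Real.rpow_neg hy.le,
    div_eq_inv_mul]

lemma lintegral_eq_abs_mul_lintegral_comp_mul_left (f : ℝ → ENNReal) {z : ℝ} (hz : z ≠ 0) :
    ∫⁻ x, f x = ENNReal.ofReal |z| * ∫⁻ u, f (z * u) := by
  conv_lhs => rw [← Real.smul_map_volume_mul_left hz]
  rw [lintegral_smul_measure, (measurableEmbedding_mulLeft₀ hz).lintegral_map, smul_eq_mul]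

section

variable {a b c r : ℝ}

lemma mul_gammaPDFReal_mul_gammaPDFReal (ha : 0 < a) (hb : 0 < b) (hr : 0 < r) {z u : ℝ}
    (hz : 0 < z) (hu0 : u ≠ 0) (hu1 : u ≠ 1) :
    z * (gammaPDFReal a r (z * u) * gammaPDFReal b r (-(z * u) + z)) =
      gammaPDFReal (a + b) r z * betaPDFReal a b u := by
  rcases hu0.lt_or_gt with hu0 | hu0
  · simp [gammaPDFReal, betaPDFReal, (mul_neg_of_pos_of_neg hz hu0).not_ge, hu0.not_gt]
  rcases hu1.lt_or_gt with hu1 | hu1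
  · have hu : 0 < 1 - u := sub_pos.2 hu1
    rw [show -(z * u) + z = z * (1 - u) by ring]
    simp only [gammaPDFReal, betaPDFReal, beta, hu0, hu1, hz.le, and_self, if_true,
      (mul_pos hz hu0).le, (mul_pos hz hu).le]
    have hz_pow : z ^ (a + b - 1) = z * (z ^ (a - 1) * z ^ (b - 1)) := by
      rw [← Real.rpow_add hz, mul_comm, ← Real.rpow_add_one hz.ne']; ring_nf
    have hexp : Real.exp (-(r * z)) =
        Real.exp (-(r * (z * u))) * Real.exp (-(r * (z * (1 - u)))) := by
      rw [← Real.exp_add]; ring_nf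
    rw [hz_pow, hexp, Real.rpow_add hr, Real.mul_rpow hz.le hu0.le, Real.mul_rpow hz.le hu.le]
    field_simp
  · have : ¬ 0 ≤ -(z * u) + z := by nlinarith
    simp [gammaPDFReal, betaPDFReal, this, hu1.not_gt]

lemma lconvolution_gammaPDF_of_pos (ha : 0 < a) (hb : 0 < b) (hr : 0 < r) {z : ℝ} (hz : 0 < z) :
    (gammaPDF a r ⋆ₗ gammaPDF b r) z = gammaPDF (a + b) r z := by
  rw [lconvolution_def, lintegral_eq_abs_mul_lintegral_comp_mul_left _ hz.ne',
    ← lintegral_const_mul' _ _ ENNReal.ofReal_ne_top]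
  calc ∫⁻ u, ENNReal.ofReal |z| * (gammaPDF a r (z * u) * gammaPDF b r (-(z * u) + z))
    _ = ∫⁻ u, gammaPDF (a + b) r z * betaPDF a b u := by
      refine lintegral_congr_ae ?_
      filter_upwards [Measure.ae_ne volume (0 : ℝ), Measure.ae_ne volume (1 : ℝ)] with u hu0 hu1
      simp only [gammaPDF, betaPDF, abs_of_pos hz]
      rw [← ENNReal.ofReal_mul (gammaPDFReal_nonneg ha hr _), ← ENNReal.ofReal_mul hz.le,
        ← ENNReal.ofReal_mul (gammaPDFReal_nonneg (add_pos ha hb) hr _),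
        mul_gammaPDFReal_mul_gammaPDFReal ha hb hr hz hu0 hu1]
    _ = gammaPDF (a + b) r z := by
      rw [lintegral_const_mul' (gammaPDF (a + b) r z) _ ENNReal.ofReal_ne_top,
        lintegral_betaPDF_eq_one ha hb, mul_one]

lemma lconvolution_gammaPDF_of_neg (a b r : ℝ) {z : ℝ} (hz : z < 0) :
    (gammaPDF a r ⋆ₗ gammaPDF b r) z = 0 := by
  rw [lconvolution_def]
  refine (lintegral_congr fun x ↦ ?_).trans lintegral_zero
  rcases lt_or_ge x 0 with hx | hx
  · rw [gammaPDF_of_neg hx, zero_mul]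
  · rw [gammaPDF_of_neg (by linarith : -x + z < 0), mul_zero]

theorem gammaMeasure_conv_gammaMeasure (ha : 0 < a) (hb : 0 < b) (hr : 0 < r) :
    gammaMeasure a r ∗ gammaMeasure b r = gammaMeasure (a + b) r := by
  rw [gammaMeasure, gammaMeasure,
    conv_withDensity_eq_lconvolution (measurable_gammaPDF a r) (measurable_gammaPDF b r)]
  refine withDensity_congr_ae ?_
  filter_upwards [Measure.ae_ne volume (0 : ℝ)] with z hz
  rcases hz.lt_or_gt with hz | hz
  · rw [lconvolution_gammaPDF_of_neg a b r hz, gammaPDF_of_neg hz]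
  · exact lconvolution_gammaPDF_of_pos ha hb hr hz

theorem gammaMeasure_withDensity_rpow (ha : 0 < a) (hac : 0 < a + c) (hr : 0 < r) :
    (gammaMeasure a r).withDensity (fun x ↦ ENNReal.ofReal (x ^ c)) =
      ENNReal.ofReal (Real.Gamma (a + c) / (Real.Gamma a * r ^ c)) • gammaMeasure (a + c) r := by
  rw [gammaMeasure, gammaMeasure, ← withDensity_mul _ (measurable_gammaPDF a r) (by fun_prop),
    ← withDensity_smul _ (measurable_gammaPDF (a + c) r)]
  refine withDensity_congr_ae ?_
  filter_upwards [Measure.ae_ne volume (0 : ℝ)] with x hx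
  rcases hx.lt_or_gt with hx | hx
  · simp [gammaPDF_of_neg hx]
  · simp only [Pi.mul_apply, Pi.smul_apply, smul_eq_mul, gammaPDF_of_nonneg hx.le]
    rw [← ENNReal.ofReal_mul (by positivity), ← ENNReal.ofReal_mul (by positivity),
      Real.rpow_add hr, add_sub_right_comm, Real.rpow_add hx]
    congr 1
    field_simp

lemma lintegral_rpow_mul_gammaMeasure (ha : 0 < a) (hac : 0 < a + c) (hr : 0 < r)
    {f : ℝ → ENNReal} (hf : Measurable f) :
    ∫⁻ x, ENNReal.ofReal (x ^ c) * f x ∂gammaMeasure a r =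
      ENNReal.ofReal (Real.Gamma (a + c) / (Real.Gamma a * r ^ c)) *
        ∫⁻ x, f x ∂gammaMeasure (a + c) r := by
  rw [← smul_eq_mul, ← lintegral_smul_measure, ← gammaMeasure_withDensity_rpow ha hac hr,
    lintegral_withDensity_eq_lintegral_mul _ (by fun_prop) hf]
  rfl

lemma lintegral_rpow_gammaMeasure (ha : 0 < a) (hac : 0 < a + c) (hr : 0 < r) :
    ∫⁻ x, ENNReal.ofReal (x ^ c) ∂gammaMeasure a r =
      ENNReal.ofReal (Real.Gamma (a + c) / (Real.Gamma a * r ^ c)) := by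
  have := isProbabilityMeasure_gammaMeasure hac hr
  simpa using lintegral_rpow_mul_gammaMeasure ha hac hr (f := fun _ ↦ 1) measurable_const

theorem lintegral_one_add_div_rpow_gammaMeasure_prod (ha : 0 < a) (hb : 0 < b)
    (hr : 0 < r) (hc : c < b) :
    ∫⁻ p : ℝ × ℝ, ENNReal.ofReal ((1 + p.1 / p.2) ^ c)
        ∂((gammaMeasure a r).prod (gammaMeasure b r)) =
      ENNReal.ofReal (beta a (b - c) / beta a b) := by
  have hbc : 0 < b + -c := by linarith
  have habc : 0 < a + (b + -c) := add_pos ha hbc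
  have := isProbabilityMeasure_gammaMeasure hb hr
  have := isProbabilityMeasure_gammaMeasure hbc hr
  set C := ENNReal.ofReal (Real.Gamma (b + -c) / (Real.Gamma b * r ^ (-c)))
  have tilt : ∀ᵐ x ∂gammaMeasure a r,
      ∫⁻ y, ENNReal.ofReal ((1 + x / y) ^ c) ∂gammaMeasure b r =
        C * ∫⁻ y, ENNReal.ofReal ((x + y) ^ c) ∂gammaMeasure (b + -c) r := by
    filter_upwards [ae_pos_gammaMeasure a r] with x hx
    rw [← lintegral_rpow_mul_gammaMeasure hb hbc hr (by fun_prop)]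
    refine lintegral_congr_ae ?_
    filter_upwards [ae_pos_gammaMeasure b r] with y hy
    rw [one_add_div_rpow hx.le hy, ENNReal.ofReal_mul (by positivity)]
  calc ∫⁻ p : ℝ × ℝ, ENNReal.ofReal ((1 + p.1 / p.2) ^ c)
        ∂((gammaMeasure a r).prod (gammaMeasure b r))
    _ = C * ∫⁻ x, ∫⁻ y, ENNReal.ofReal ((x + y) ^ c) ∂gammaMeasure (b + -c) r
          ∂gammaMeasure a r := by
      rw [lintegral_prod _ (by fun_prop), lintegral_congr_ae tilt,
        lintegral_const_mul' _ _ ENNReal.ofReal_ne_top]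
    _ = C * ∫⁻ z, ENNReal.ofReal (z ^ c) ∂gammaMeasure (a + (b + -c)) r := by
      rw [← gammaMeasure_conv_gammaMeasure ha hbc hr, Measure.lintegral_conv (by fun_prop)]
    _ = ENNReal.ofReal (beta a (b - c) / beta a b) := by
      rw [lintegral_rpow_gammaMeasure habc (by linarith) hr, ← ENNReal.ofReal_mul (by positivity),
        Real.rpow_neg hr.le, show a + (b + -c) + c = a + b by ring, ← sub_eq_add_neg, beta, beta]
      congr 1
      field_simp

end

theorem stmt_12_general {r m α : ℝ} (hr : 0 < r) (hm : 0 < m) (hα : α < m / 2) :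
    ∫⁻ p : ℝ × ℝ, ENNReal.ofReal ((1 + p.1 / p.2) ^ α)
        ∂((chiSquared r).prod (chiSquared m)) ≤
      ENNReal.ofReal
        (Real.Gamma ((m + r) / 2) / (Real.Gamma (r / 2) * Real.Gamma (m / 2)) *
          (2 / (m - 2 * α) + 2 / r)) := by
  have beta_le : beta (r / 2) (m / 2 - α) ≤ 2 / (m - 2 * α) + 2 / r := by
    calc beta (r / 2) (m / 2 - α)
      _ ≤ 1 / (r / 2) + 1 / (m / 2 - α) :=
        beta_le_one_div_add_one_div (half_pos hr) (sub_pos.2 hα)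
      _ = 2 / (m - 2 * α) + 2 / r := by
        rw [show m / 2 - α = (m - 2 * α) / 2 by ring, one_div_div, one_div_div, add_comm]
  have inv_beta : Real.Gamma ((m + r) / 2) / (Real.Gamma (r / 2) * Real.Gamma (m / 2)) =
      1 / beta (r / 2) (m / 2) := by
    rw [beta, one_div_div, ← add_div, add_comm m]
  rw [chiSquared, chiSquared, lintegral_one_add_div_rpow_gammaMeasure_prod (half_pos hr)
    (half_pos hm) one_half_pos hα, inv_beta, one_div_mul_eq_div]
  exact ENNReal.ofReal_le_ofReal
    (div_le_div_of_nonneg_right beta_le (beta_pos (half_pos hr) (half_pos hm)).le)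

theorem stmt_12 (r m : ℕ) (hr : 1 ≤ r) (hm : 1 ≤ m)
    (α : ℝ) (hα0 : 0 ≤ α) (hα : α < m / 2) :
    ∫⁻ p : ℝ × ℝ, ENNReal.ofReal ((1 + p.1 / p.2) ^ α)
        ∂((chiSquared r).prod (chiSquared m)) ≤
      ENNReal.ofReal
        (Real.Gamma (((m : ℝ) + r) / 2) /
            (Real.Gamma ((r : ℝ) / 2) * Real.Gamma ((m : ℝ) / 2)) *
          (2 / ((m : ℝ) - 2 * α) + 2 / r)) := by
  exact stmt_12_general (by exact_mod_cast hr) (by exact_mod_cast hm) hα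
end

section
/- Let n, i, r be positive integers with n ≥ i + r. Then Γ((n−i+1)/2) / Γ((n−i−r+1)/2) ≤ (n/2)^{⌈r/2⌉}, where Γ is the Gamma function and ⌈·⌉ is the ceiling function. -/
/-!
`log ∘ Γ` is convex on `(0, ∞)`, so its slope over `[x, x + s]` is at most its slope over
`[x + s, x + s + 1]`, and the latter is `log (x + s)` by the functional equation. Hence
`Γ (x + s) / Γ x ≤ (x + s) ^ s`. For `x = (n - i - r + 1) / 2` and `s = r / 2` the base `x + s` is
at most `n / 2`, and rounding the exponent up is harmless because `1 ≤ n / 2`.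
-/

open Real

theorem log_Gamma_add_one_sub_log_Gamma {x : ℝ} (hx : 0 < x) :
    log (Gamma (x + 1)) - log (Gamma x) = log x := by
  rw [Gamma_add_one hx.ne', log_mul hx.ne' (Gamma_pos_of_pos hx).ne', add_sub_cancel_right]

theorem log_Gamma_add_sub_log_Gamma_le {x s : ℝ} (hx : 0 < x) (hs : 0 ≤ s) :
    log (Gamma (x + s)) - log (Gamma x) ≤ s * log (x + s) := by
  obtain rfl | hs := hs.eq_or_lt
  · simp
  have hxs : 0 < x + s := by positivity
  have slope_le := convexOn_log_Gamma.slope_mono_adjacent (Set.mem_Ioi.2 hx)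
    (Set.mem_Ioi.2 (by positivity : 0 < x + s + 1)) (lt_add_of_pos_right x hs) (lt_add_one (x + s))
  simp only [Function.comp_apply, add_sub_cancel_left, div_one,
    log_Gamma_add_one_sub_log_Gamma hxs] at slope_le
  exact (div_le_iff₀' hs).1 slope_le

theorem Gamma_add_div_Gamma_le_rpow {x s : ℝ} (hx : 0 < x) (hs : 0 ≤ s) :
    Gamma (x + s) / Gamma x ≤ (x + s) ^ s := by
  have hxs : 0 < x + s := by positivity
  have hΓx := Gamma_pos_of_pos hx
  have hΓxs := Gamma_pos_of_pos hxs
  rw [le_rpow_iff_log_le (div_pos hΓxs hΓx) hxs, log_div hΓxs.ne' hΓx.ne']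
  exact log_Gamma_add_sub_log_Gamma_le hx hs

theorem stmt_14_general {n i r : ℝ} (hi : 1 ≤ i) (hr : 0 ≤ r) (h : i + r < n + 1) :
    Gamma ((n - i + 1) / 2) / Gamma ((n - i - r + 1) / 2) ≤ (n / 2) ^ (r / 2) := by
  have hx : 0 < (n - i - r + 1) / 2 := by linarith
  have hs : 0 ≤ r / 2 := by positivity
  calc Gamma ((n - i + 1) / 2) / Gamma ((n - i - r + 1) / 2)
      = Gamma ((n - i - r + 1) / 2 + r / 2) / Gamma ((n - i - r + 1) / 2) := by ring_nf
    _ ≤ ((n - i - r + 1) / 2 + r / 2) ^ (r / 2) := Gamma_add_div_Gamma_le_rpow hx hs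
    _ ≤ (n / 2) ^ (r / 2) := rpow_le_rpow (by positivity) (by linarith) hs

theorem stmt_14 (n i r : ℕ) (hn : 0 < n) (hi : 0 < i) (hr : 0 < r)
    (h : i + r ≤ n) :
    Real.Gamma (((n : ℝ) - i + 1) / 2) / Real.Gamma (((n : ℝ) - i - r + 1) / 2) ≤
      ((n : ℝ) / 2) ^ ⌈(r : ℝ) / 2⌉₊ := by
  have one_le_i : (1 : ℝ) ≤ i := mod_cast hi
  have one_le_r : (1 : ℝ) ≤ r := mod_cast hr
  have add_le_n : (i : ℝ) + r ≤ n := mod_cast h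
  calc Real.Gamma (((n : ℝ) - i + 1) / 2) / Real.Gamma (((n : ℝ) - i - r + 1) / 2)
      ≤ ((n : ℝ) / 2) ^ ((r : ℝ) / 2) := stmt_14_general one_le_i r.cast_nonneg (by linarith)
    _ ≤ ((n : ℝ) / 2) ^ (⌈(r : ℝ) / 2⌉₊ : ℝ) :=
      rpow_le_rpow_of_exponent_le (by linarith) (Nat.le_ceil _)
    _ = ((n : ℝ) / 2) ^ ⌈(r : ℝ) / 2⌉₊ := rpow_natCast _ _
end
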